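/- Let 𝒳 be a complex Banach space and T > 0. An evolution family on [0,T] is a two-parameter family of bounded linear operators U(t,s) : 𝒳 → 𝒳, defined for 0 ≤ s ≤ t ≤ T, such that U(t,r)U(r,s) = U(t,s) for all 0 ≤ s ≤ r ≤ t ≤ T, U(s,s) = I for all s ∈ [0,T], and (t,s) ↦ U(t,s)x is continuous for every x ∈ 𝒳; set M₀ = sup_{0 ≤ s ≤ t ≤ T} ‖U(t,s)‖ and assume M₀ < ∞. Let F : [0,T] × 𝒳 → 𝒳 be continuous with F(t,0) = 0 for all t, and assume that for every τ ∈ (0,T] and ρ > 0 there is L_{τ,ρ} ≥ 0, nondecreasing in both τ and ρ, with ‖F(t,x) − F(t,y)‖ ≤ L_{τ,ρ}‖x − y‖ for all t ∈ [0,τ] and all x, y with ‖x‖ ≤ ρ, ‖y‖ ≤ ρ. A mild solution with initial datum X₀ on an interval I containing 0 is a continuous X : I → 𝒳 with X(t) = U(t,0)X₀ + ∫₀ᵗ U(t,s)F(s, X(s)) ds for all t ∈ I. Then for every X₀ ∈ 𝒳 there exists a maximal mild solution: there are t⁺(X₀) ∈ (0, T] and a mild solution X defined on I, where I = [0,T]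 or I = [0, t⁺(X₀)), such that every mild solution with initial datum X₀ defined on an interval J ⊆ [0,T] containing 0 is the restriction of X to J (in particular J ⊆ I). -/

import Mathlib

open MeasureTheory

lemma mms_iter (K C b : ℝ) (hK : 0 ≤ K) (d : ℕ → ℝ → ℝ) (hd : ∀ n, Continuous (d n))
    (h0 : ∀ t ∈ Set.Icc 0 b, d 0 t ≤ C)
    (hs : ∀ n, ∀ t ∈ Set.Icc 0 b, d (n+1) t ≤ K * ∫ s in (0:ℝ)..t, d n s) :
    ∀ n, ∀ t ∈ Set.Icc 0 b, d n t ≤ C * ((K * t) ^ n / (n.factorial : ℝ)) := by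
  intro n
  induction n with
  | zero => intro t ht; simpa using h0 t ht
  | succ n ih =>
    intro t ht
    refine (hs n t ht).trans ?_
    have h1 : ∫ s in (0:ℝ)..t, d n s ≤
        ∫ s in (0:ℝ)..t, C * K ^ n / (n.factorial : ℝ) * s ^ n := by
      apply intervalIntegral.integral_mono_on ht.1
      · exact (hd n).intervalIntegrable _ _
      · exact Continuous.intervalIntegrable (by fun_prop) _ _
      · intro s hs
        refine (ih s ⟨hs.1, hs.2.trans ht.2⟩).trans (le_of_eq ?_)
        rw [mul_pow]; ring
    refine (mul_le_mul_of_nonneg_left h1 hK).trans (le_of_eq ?_)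
    rw [intervalIntegral.integral_const_mul, integral_pow, Nat.factorial_succ]
    push_cast
    have : (n.factorial : ℝ) ≠ 0 := by positivity
    have : (n + 1 : ℝ) ≠ 0 := by positivity
    field_simp
    simp
    ring

section
variable {E : Type*} [NormedAddCommGroup E] [NormedSpace ℝ E]

lemma mms_diff (K : ℝ) (H : ℝ → ℝ → E → E)
    (hH : Continuous (fun p : ℝ × ℝ × E => H p.1 p.2.1 p.2.2))
    (hLip : ∀ t s x y, ‖H t s x - H t s y‖ ≤ K * ‖x - y‖)
    (f g : ℝ → E) (hf : Continuous f) (hg : Continuous g) (t : ℝ) (ht : 0 ≤ t) :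
    ‖(∫ s in (0:ℝ)..t, H t s (f s)) - ∫ s in (0:ℝ)..t, H t s (g s)‖ ≤
      K * ∫ s in (0:ℝ)..t, ‖f s - g s‖ := by
  have hc : ∀ f : ℝ → E, Continuous f → Continuous (fun s => H t s (f s)) := fun f hf =>
    hH.comp (continuous_const.prodMk (continuous_id.prodMk hf))
  rw [← intervalIntegral.integral_sub ((hc f hf).intervalIntegrable _ _)
    ((hc g hg).intervalIntegrable _ _), ← intervalIntegral.integral_const_mul]
  apply intervalIntegral.norm_integral_le_of_norm_le ht
  · exact Filter.Eventually.of_forall fun s _ => hLip _ _ _ _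
  · exact Continuous.intervalIntegrable (by fun_prop) _ _

lemma mms_unique (b K : ℝ) (hK : 0 ≤ K) (H : ℝ → ℝ → E → E)
    (hH : Continuous (fun p : ℝ × ℝ × E => H p.1 p.2.1 p.2.2))
    (hLip : ∀ t s x y, ‖H t s x - H t s y‖ ≤ K * ‖x - y‖)
    (φ : ℝ → E) (f g : ℝ → E) (hf : Continuous f) (hg : Continuous g)
    (hfe : ∀ t ∈ Set.Icc 0 b, f t = φ t + ∫ s in (0:ℝ)..t, H t s (f s))
    (hge : ∀ t ∈ Set.Icc 0 b, g t = φ t + ∫ s in (0:ℝ)..t, H t s (g s)) :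
    ∀ t ∈ Set.Icc 0 b, f t = g t := by
  intro t ht
  obtain ⟨C, hC⟩ := (isCompact_Icc (a := (0:ℝ)) (b := b)).exists_bound_of_continuousOn
    (f := fun t => f t - g t) (by fun_prop)
  have h := mms_iter K C b hK (fun _ t => ‖f t - g t‖) (fun _ => by fun_prop) hC (by
    intro n t ht
    have := mms_diff K H hH hLip f g hf hg t ht.1
    rw [hfe t ht, hge t ht, add_sub_add_left_eq_sub]
    exact this)
  have hl := (FloorSemiring.tendsto_pow_div_factorial_atTop (K * t)).const_mul C
  have := ge_of_tendsto' hl (fun n => h n t ht)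
  rw [mul_zero] at this
  exact sub_eq_zero.1 (norm_le_zero_iff.1 this)

lemma mms_exists [CompleteSpace E] (T K : ℝ) (hT : 0 ≤ T) (hK : 0 ≤ K) (H : ℝ → ℝ → E → E)
    (hH : Continuous (fun p : ℝ × ℝ × E => H p.1 p.2.1 p.2.2))
    (hLip : ∀ t s x y, ‖H t s x - H t s y‖ ≤ K * ‖x - y‖)
    (φ : ℝ → E) (hφ : Continuous φ) :
    ∃ Z : ℝ → E, Continuous Z ∧
      ∀ t ∈ Set.Icc 0 T, Z t = φ t + ∫ s in (0:ℝ)..t, H t s (Z s) := by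
  let e : C(Set.Icc (0:ℝ) T, E) → ℝ → E := fun f s => f (Set.projIcc 0 T hT s)
  have he : ∀ f, Continuous (e f) := fun f => f.continuous.comp continuous_projIcc
  have hcont : ∀ f : C(Set.Icc (0:ℝ) T, E),
      Continuous (fun t : ℝ => φ t + ∫ s in (0:ℝ)..t, H t s (e f s)) := by
    intro f
    refine hφ.add ?_
    refine intervalIntegral.continuous_parametric_intervalIntegral_of_continuous
      (f := fun t s => H t s (e f s)) ?_ continuous_id
    have := he f
    exact hH.comp (continuous_fst.prodMk (continuous_snd.prodMk (this.comp continuous_snd)))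
  let Φ : C(Set.Icc (0:ℝ) T, E) → C(Set.Icc (0:ℝ) T, E) := fun f =>
    ⟨fun t => φ t + ∫ s in (0:ℝ)..t, H t s (e f s), (hcont f).comp continuous_subtype_val⟩
  have hΦ : ∀ f, ∀ t ∈ Set.Icc (0:ℝ) T, e (Φ f) t = φ t + ∫ s in (0:ℝ)..t, H t s (e f s) := by
    intro f t ht
    simp only [e, Set.projIcc_of_mem hT ht]
    rfl
  have hit : ∀ f g : C(Set.Icc (0:ℝ) T, E), ∀ n, ∀ t ∈ Set.Icc (0:ℝ) T,
      ‖e (Φ^[n] f) t - e (Φ^[n] g) t‖ ≤ dist f g * ((K * t) ^ n / (n.factorial : ℝ)) := by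
    intro f g
    apply mms_iter K (dist f g) T hK (fun n t => ‖e (Φ^[n] f) t - e (Φ^[n] g) t‖)
    · intro n
      exact ((he _).sub (he _)).norm
    · intro t ht
      rw [← dist_eq_norm]
      exact ContinuousMap.dist_apply_le_dist _
    · intro n t ht
      rw [Function.iterate_succ_apply', Function.iterate_succ_apply', hΦ _ t ht, hΦ _ t ht,
        add_sub_add_left_eq_sub]
      exact mms_diff K H hH hLip _ _ (he _) (he _) t ht.1
  obtain ⟨n, hn⟩ := ((FloorSemiring.tendsto_pow_div_factorial_atTop (K * T)).eventually
    (gt_mem_nhds (show (0:ℝ) < 1/2 by norm_num))).exists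
  have hcw : ContractingWith (1/2 : NNReal) (Φ^[n]) := by
    refine ⟨by rw [← NNReal.coe_lt_coe]; norm_num, LipschitzWith.of_dist_le_mul fun f g => ?_⟩
    rw [ContinuousMap.dist_le (by positivity)]
    intro t
    have h := hit f g n t t.2
    simp only [e, Set.projIcc_val] at h
    rw [dist_eq_norm, mul_comm]
    refine h.trans (mul_le_mul_of_nonneg_left ?_ dist_nonneg)
    have : (K * (t:ℝ)) ^ n / (n.factorial : ℝ) ≤ (K * T) ^ n / (n.factorial : ℝ) := by
      have := t.2.1
      have := t.2.2
      gcongr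
    refine this.trans ?_
    push_cast
    exact hn.le
  have : Nonempty C(Set.Icc (0:ℝ) T, E) := ⟨0⟩
  have hfix := hcw.isFixedPt_fixedPoint_iterate
  refine ⟨e (ContractingWith.fixedPoint _ hcw), he _, fun t ht => ?_⟩
  have := hΦ (ContractingWith.fixedPoint _ hcw) t ht
  rw [hfix] at this
  exact this

/-- radial retraction -/
noncomputable def mmsRet (ρ : ℝ) (x : E) : E := (ρ / max ρ ‖x‖) • x

lemma mmsRet_continuous (ρ : ℝ) (hρ : 0 < ρ) : Continuous (mmsRet (E := E) ρ) := by
  unfold mmsRet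
  refine Continuous.smul (Continuous.div continuous_const (by fun_prop) fun x => ?_) continuous_id
  exact (lt_max_of_lt_left hρ).ne'

lemma mmsRet_norm (ρ : ℝ) (hρ : 0 < ρ) (x : E) : ‖mmsRet ρ x‖ ≤ ρ := by
  have hp : 0 < max ρ ‖x‖ := lt_max_of_lt_left hρ
  rw [mmsRet, norm_smul, Real.norm_of_nonneg (by positivity), div_mul_eq_mul_div, div_le_iff₀ hp]
  exact mul_le_mul_of_nonneg_left (le_max_right _ _) hρ.le

lemma mmsRet_eq (ρ : ℝ) (hρ : 0 < ρ) (x : E) (hx : ‖x‖ ≤ ρ) : mmsRet ρ x = x := by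
  rw [mmsRet, max_eq_left hx, div_self hρ.ne', one_smul]

lemma mmsRet_lip (ρ : ℝ) (hρ : 0 < ρ) (x y : E) :
    ‖mmsRet ρ x - mmsRet ρ y‖ ≤ 2 * ‖x - y‖ := by
  unfold mmsRet
  have hp : 0 < max ρ ‖x‖ := lt_max_of_lt_left hρ
  have hq : 0 < max ρ ‖y‖ := lt_max_of_lt_left hρ
  have hpρ : ρ ≤ max ρ ‖x‖ := le_max_left _ _
  have hqy : ‖y‖ ≤ max ρ ‖y‖ := le_max_right _ _
  have hpq : |max ρ ‖y‖ - max ρ ‖x‖| ≤ ‖x - y‖ := by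
    rw [abs_sub_comm]
    rw [max_comm ρ, max_comm ρ]
    exact (abs_max_sub_max_le_abs _ _ _).trans (abs_norm_sub_norm_le x y)
  set p := max ρ ‖x‖
  set q := max ρ ‖y‖
  have e : (ρ / p) • x - (ρ / q) • y = (ρ / p) • (x - y) + (ρ / p - ρ / q) • y := by
    rw [smul_sub, sub_smul]; abel
  rw [e]
  refine (norm_add_le _ _).trans ?_
  rw [norm_smul, norm_smul, Real.norm_of_nonneg (by positivity), Real.norm_eq_abs]
  have e2 : ρ / p - ρ / q = (ρ / p) * (q - p) * (1 / q) := by field_simp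
  have h1 : ρ / p ≤ 1 := (div_le_one hp).2 hpρ
  have h3 : ‖y‖ / q ≤ 1 := (div_le_one hq).2 hqy
  have h2 : |ρ / p - ρ / q| * ‖y‖ ≤ ‖x - y‖ := by
    rw [e2, abs_mul, abs_mul, abs_of_nonneg (show 0 ≤ ρ / p by positivity),
      abs_of_nonneg (show 0 ≤ 1 / q by positivity)]
    calc ρ / p * |q - p| * (1 / q) * ‖y‖ = ρ / p * |q - p| * (‖y‖ / q) := by ring
      _ ≤ 1 * ‖x - y‖ * 1 := by gcongr
      _ = _ := by ring
  have := mul_le_mul_of_nonneg_right h1 (norm_nonneg (x - y))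
  linarith
end

lemma mms_strong {A E : Type*} [TopologicalSpace A] [NormedAddCommGroup E] [NormedSpace ℂ E]
    (v : A → E →L[ℂ] E) (M : ℝ) (hM : ∀ a, ‖v a‖ ≤ M) (hv : ∀ x, Continuous (fun a => v a x))
    (g : A → E) (hg : Continuous g) : Continuous (fun a => v a (g a)) := by
  rw [continuous_iff_continuousAt]
  intro a₀
  have h1 : Filter.Tendsto (fun a => v a (g a - g a₀)) (nhds a₀) (nhds 0) := by
    have : Filter.Tendsto (fun a => M * ‖g a - g a₀‖) (nhds a₀) (nhds 0) := by
      have : Continuous (fun a => M * ‖g a - g a₀‖) := by fun_prop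
      simpa using this.tendsto a₀
    exact squeeze_zero_norm (fun a => (v a).le_of_opNorm_le (hM a) _) this
  have := h1.add ((hv (g a₀)).tendsto a₀)
  simpa [ContinuousAt] using this

lemma mms_trunc {𝒳 : Type*} [NormedAddCommGroup 𝒳]
    [NormedSpace ℂ 𝒳] [CompleteSpace 𝒳]
    (T : ℝ) (hT : 0 < T)
    (U : ℝ → ℝ → 𝒳 →L[ℂ] 𝒳)
    (hUcont : ∀ x : 𝒳, ContinuousOn (fun p : ℝ × ℝ => U p.1 p.2 x)
      {p : ℝ × ℝ | 0 ≤ p.2 ∧ p.2 ≤ p.1 ∧ p.1 ≤ T})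
    (M₀ : ℝ) (hM₀ : ∀ s t : ℝ, 0 ≤ s → s ≤ t → t ≤ T → ‖U t s‖ ≤ M₀)
    (F : ℝ → 𝒳 → 𝒳)
    (hF : ContinuousOn (fun p : ℝ × 𝒳 => F p.1 p.2) (Set.Icc 0 T ×ˢ Set.univ))
    (ρ Lc : ℝ) (hρ : 0 < ρ) (hLc : 0 ≤ Lc)
    (hLip : ∀ t ∈ Set.Icc (0:ℝ) T, ∀ x y : 𝒳,
      ‖x‖ ≤ ρ → ‖y‖ ≤ ρ → ‖F t x - F t y‖ ≤ Lc * ‖x - y‖)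
    (X₀ : 𝒳) :
    ∃ Z : ℝ → 𝒳, Continuous Z ∧
      (∀ b ≤ T, ∀ Y : ℝ → 𝒳, ContinuousOn Y (Set.Icc 0 b) →
        (∀ t ∈ Set.Icc 0 b, Y t = U t 0 X₀ + ∫ s in (0:ℝ)..t, U t s (F s (Y s))) →
        (∀ t ∈ Set.Icc 0 b, ‖Y t‖ ≤ ρ) → ∀ t ∈ Set.Icc 0 b, Y t = Z t) ∧
      (∀ b ≤ T, (∀ t ∈ Set.Icc 0 b, ‖Z t‖ ≤ ρ) →
        ∀ t ∈ Set.Icc 0 b, Z t = U t 0 X₀ + ∫ s in (0:ℝ)..t, U t s (F s (Z s))) := by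
  let c : ℝ → ℝ := fun t => max 0 (min t T)
  have hc : Continuous c := by fun_prop
  have hc0 : ∀ t, 0 ≤ c t := fun t => le_max_left _ _
  have hcT : ∀ t, c t ≤ T := fun t => max_le hT.le (min_le_right _ _)
  have hce : ∀ t, 0 ≤ t → t ≤ T → c t = t := fun t h0 h1 => by
    simp only [c, min_eq_left h1, max_eq_right h0]
  let V : ℝ × ℝ → 𝒳 →L[ℂ] 𝒳 := fun p => U (c p.1) (min (c p.2) (c p.1))
  have hVM : ∀ p, ‖V p‖ ≤ M₀ := fun p =>
    hM₀ _ _ (le_min (hc0 _) (hc0 _)) (min_le_right _ _) (hcT _)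
  have hVc : ∀ x, Continuous (fun p => V p x) := by
    intro x
    have h1 : Continuous (fun p : ℝ × ℝ => (c p.1, min (c p.2) (c p.1))) := by fun_prop
    exact (hUcont x).comp_continuous h1 fun p =>
      ⟨le_min (hc0 _) (hc0 _), min_le_right _ _, hcT _⟩
  have hM0 : 0 ≤ M₀ := (norm_nonneg _).trans (hVM (0, 0))
  have hr := mmsRet_continuous (E := 𝒳) ρ hρ
  let G : ℝ → 𝒳 → 𝒳 := fun s x => F (c s) (mmsRet ρ x)
  have hG : Continuous (fun p : ℝ × 𝒳 => G p.1 p.2) := by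
    have h1 : Continuous (fun p : ℝ × 𝒳 => (c p.1, mmsRet ρ p.2)) := by fun_prop
    exact hF.comp_continuous h1 fun p => ⟨⟨hc0 _, hcT _⟩, Set.mem_univ _⟩
  let H : ℝ → ℝ → 𝒳 → 𝒳 := fun t s x => V (t, s) (G s x)
  have hH : Continuous (fun p : ℝ × ℝ × 𝒳 => H p.1 p.2.1 p.2.2) := by
    refine mms_strong (fun p : ℝ × ℝ × 𝒳 => V (p.1, p.2.1)) M₀ (fun _ => hVM _) (fun x => ?_)
      (fun p => G p.2.1 p.2.2) (hG.comp continuous_snd)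
    exact (hVc x).comp (continuous_fst.prodMk (continuous_fst.comp continuous_snd))
  have hHL : ∀ t s x y, ‖H t s x - H t s y‖ ≤ (M₀ * (Lc * 2)) * ‖x - y‖ := by
    intro t s x y
    simp only [H]
    rw [← map_sub]
    refine ((V (t, s)).le_of_opNorm_le (hVM _) _).trans ?_
    rw [mul_assoc, mul_assoc]
    refine mul_le_mul_of_nonneg_left ?_ hM0
    refine (hLip _ ⟨hc0 _, hcT _⟩ _ _ (mmsRet_norm ρ hρ x) (mmsRet_norm ρ hρ y)).trans ?_
    exact mul_le_mul_of_nonneg_left (mmsRet_lip ρ hρ x y) hLc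
  have hK : 0 ≤ M₀ * (Lc * 2) := by positivity
  let φ : ℝ → 𝒳 := fun t => V (t, 0) X₀
  have hφ : Continuous φ := (hVc X₀).comp (continuous_id.prodMk continuous_const)
  have hφe : ∀ t, 0 ≤ t → t ≤ T → φ t = U t 0 X₀ := by
    intro t h0 h1
    simp only [φ, V, hce t h0 h1, hce 0 le_rfl hT.le, min_eq_left h0]
  have hint : ∀ b ≤ T, ∀ Y : ℝ → 𝒳, (∀ t ∈ Set.Icc 0 b, ‖Y t‖ ≤ ρ) → ∀ t ∈ Set.Icc 0 b,
      ∫ s in (0:ℝ)..t, H t s (Y s) = ∫ s in (0:ℝ)..t, U t s (F s (Y s)) := by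
    intro b hb Y hY t ht
    apply intervalIntegral.integral_congr
    intro s hs
    rw [Set.uIcc_of_le ht.1] at hs
    have hsb : s ≤ b := hs.2.trans ht.2
    simp only [H, V, G]
    rw [hce t ht.1 (ht.2.trans hb), hce s hs.1 (hsb.trans hb), min_eq_left hs.2,
      mmsRet_eq ρ hρ _ (hY s ⟨hs.1, hsb⟩)]
  obtain ⟨Z, hZc, hZ⟩ := mms_exists T _ hT.le hK H hH hHL φ hφ
  refine ⟨Z, hZc, ?_, ?_⟩
  · intro b hb Y hYc hY hYρ t ht
    have h0b : 0 ≤ b := ht.1.trans ht.2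
    let Y' : ℝ → 𝒳 := Set.IccExtend h0b (Set.domRestrict (Set.Icc 0 b) Y)
    have hY'c : Continuous Y' := (continuousOn_iff_continuous_domRestrict.1 hYc).Icc_extend'
    have hY'e : ∀ t ∈ Set.Icc 0 b, Y' t = Y t := fun t ht => by
      simp only [Y', Set.IccExtend_of_mem h0b _ ht, Set.domRestrict_apply]
    rw [← hY'e t ht]
    refine mms_unique b _ hK H hH hHL φ Y' Z hY'c hZc ?_ ?_ t ht
    · intro t ht
      rw [hY'e t ht, hY t ht, hφe t ht.1 (ht.2.trans hb), ← hint b hb Y hYρ t ht]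
      congr 1
      apply intervalIntegral.integral_congr
      intro s hs
      rw [Set.uIcc_of_le ht.1] at hs
      simp only
      rw [hY'e s ⟨hs.1, hs.2.trans ht.2⟩]
    · intro t ht
      exact hZ t ⟨ht.1, ht.2.trans hb⟩
  · intro b hb hZρ t ht
    rw [← hint b hb Z hZρ t ht, ← hφe t ht.1 (ht.2.trans hb)]
    exact hZ t ⟨ht.1, ht.2.trans hb⟩


/-- Existence and uniqueness of the maximal mild solution of the semilinear
non-autonomous evolution equation: there is a mild solution defined on `[0,T]` or on
`[0, t⁺(X₀))` of which every mild solution with the same initial datum is a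
restriction. -/
theorem maximal_mild_solution_exists {𝒳 : Type*} [NormedAddCommGroup 𝒳]
    [NormedSpace ℂ 𝒳] [CompleteSpace 𝒳]
    (T : ℝ) (hT : 0 < T)
    (U : ℝ → ℝ → 𝒳 →L[ℂ] 𝒳)
    (hUcomp : ∀ s r t : ℝ, 0 ≤ s → s ≤ r → r ≤ t → t ≤ T →
      (U t r).comp (U r s) = U t s)
    (hUid : ∀ s : ℝ, 0 ≤ s → s ≤ T → U s s = ContinuousLinearMap.id ℂ 𝒳)
    (hUcont : ∀ x : 𝒳, ContinuousOn (fun p : ℝ × ℝ => U p.1 p.2 x)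
      {p : ℝ × ℝ | 0 ≤ p.2 ∧ p.2 ≤ p.1 ∧ p.1 ≤ T})
    (M₀ : ℝ) (hM₀ : ∀ s t : ℝ, 0 ≤ s → s ≤ t → t ≤ T → ‖U t s‖ ≤ M₀)
    (F : ℝ → 𝒳 → 𝒳)
    (hF : ContinuousOn (fun p : ℝ × 𝒳 => F p.1 p.2) (Set.Icc 0 T ×ˢ Set.univ))
    (hF0 : ∀ t ∈ Set.Icc (0:ℝ) T, F t 0 = 0)
    (L : ℝ → ℝ → ℝ)
    (hL0 : ∀ τ ρ : ℝ, 0 < τ → τ ≤ T → 0 < ρ → 0 ≤ L τ ρ)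
    (hLmono : ∀ τ₁ τ₂ ρ₁ ρ₂ : ℝ, 0 < τ₁ → τ₁ ≤ τ₂ → τ₂ ≤ T → 0 < ρ₁ → ρ₁ ≤ ρ₂ →
      L τ₁ ρ₁ ≤ L τ₂ ρ₂)
    (hLip : ∀ τ ρ : ℝ, 0 < τ → τ ≤ T → 0 < ρ → ∀ t ∈ Set.Icc (0:ℝ) τ, ∀ x y : 𝒳,
      ‖x‖ ≤ ρ → ‖y‖ ≤ ρ → ‖F t x - F t y‖ ≤ L τ ρ * ‖x - y‖)
    (X₀ : 𝒳) :
    ∃ (tp : ℝ) (I : Set ℝ) (X : ℝ → 𝒳),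
      0 < tp ∧ tp ≤ T ∧
      (I = Set.Icc 0 T ∨ I = Set.Ico 0 tp) ∧
      ContinuousOn X I ∧
      (∀ t ∈ I, X t = U t 0 X₀ + ∫ s in (0:ℝ)..t, U t s (F s (X s))) ∧
      ∀ (J : Set ℝ) (Y : ℝ → 𝒳), J ⊆ Set.Icc 0 T → (0:ℝ) ∈ J → J.OrdConnected →
        ContinuousOn Y J →
        (∀ t ∈ J, Y t = U t 0 X₀ + ∫ s in (0:ℝ)..t, U t s (F s (Y s))) →
        J ⊆ I ∧ ∀ t ∈ J, Y t = X t := by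
  classical
  let mild : ℝ → (ℝ → 𝒳) → Prop := fun b Y => ContinuousOn Y (Set.Icc 0 b) ∧
    ∀ t ∈ Set.Icc 0 b, Y t = U t 0 X₀ + ∫ s in (0:ℝ)..t, U t s (F s (Y s))
  have trunc := fun (ρ : ℝ) (hρ : 0 < ρ) => mms_trunc T hT U hUcont M₀ hM₀ F hF ρ (L T ρ) hρ
    (hL0 T ρ hT le_rfl hρ) (hLip T ρ hT le_rfl hρ) X₀
  have bdd : ∀ b Y, mild b Y → ∃ C : ℝ, 0 ≤ C ∧ ∀ t ∈ Set.Icc 0 b, ‖Y t‖ ≤ C := by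
    intro b Y hY
    obtain ⟨C, hC⟩ := isCompact_Icc.exists_bound_of_continuousOn hY.1
    exact ⟨max C 0, le_max_right _ _, fun t ht => (hC t ht).trans (le_max_left _ _)⟩
  have uniq : ∀ b ≤ T, ∀ Y Y', mild b Y → mild b Y' → ∀ t ∈ Set.Icc 0 b, Y t = Y' t := by
    intro b hb Y Y' hY hY' t ht
    obtain ⟨C, hC0, hC⟩ := bdd b Y hY
    obtain ⟨C', hC0', hC'⟩ := bdd b Y' hY'
    obtain ⟨Z, -, hZ, -⟩ := trunc (C + C' + 1) (by linarith)
    rw [hZ b hb Y hY.1 hY.2 (fun t ht => by linarith [hC t ht]) t ht,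
      hZ b hb Y' hY'.1 hY'.2 (fun t ht => by linarith [hC' t ht]) t ht]
  have restr : ∀ b b' Y, b' ≤ b → mild b Y → mild b' Y := by
    intro b b' Y hb hY
    have : Set.Icc 0 b' ⊆ Set.Icc 0 b := Set.Icc_subset_Icc_right hb
    exact ⟨hY.1.mono this, fun t ht => hY.2 t (this ht)⟩
  let S : Set ℝ := {b | 0 ≤ b ∧ b ≤ T ∧ ∃ Y, mild b Y}
  have hdown : ∀ b ∈ S, ∀ b', 0 ≤ b' → b' ≤ b → b' ∈ S := by
    rintro b ⟨h0, h1, Y, hY⟩ b' h0' h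
    exact ⟨h0', h.trans h1, Y, restr _ _ _ h hY⟩
  have h0S : (0:ℝ) ∈ S := by
    refine ⟨le_rfl, hT.le, fun _ => X₀, continuousOn_const, ?_⟩
    intro t ht
    obtain rfl : t = 0 := le_antisymm ht.2 ht.1
    simp [hUid 0 le_rfl hT.le]
  have hext : ∀ b ∈ S, b < T → ∃ b' ∈ S, b < b' := by
    rintro b ⟨h0, h1, Y, hY⟩ hbT
    obtain ⟨C, hC0, hC⟩ := bdd b Y hY
    obtain ⟨Z, hZc, hZ, hZm⟩ := trunc (C + 1) (by linarith)
    have hYZ := hZ b h1 Y hY.1 hY.2 (fun t ht => by linarith [hC t ht])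
    have hZb : ‖Z b‖ < C + 1 := by
      rw [← hYZ b ⟨h0, le_rfl⟩]
      linarith [hC b ⟨h0, le_rfl⟩]
    obtain ⟨δ, hδ, hball⟩ := Metric.eventually_nhds_iff.1
      (hZc.norm.continuousAt.eventually (gt_mem_nhds hZb))
    refine ⟨min T (b + δ / 2), ⟨?_, min_le_left _ _, Z, hZc.continuousOn, ?_⟩, ?_⟩
    · exact le_min hT.le (by linarith)
    · apply hZm _ (min_le_left _ _)
      intro t ht
      by_cases htb : t ≤ b
      · rw [← hYZ t ⟨ht.1, htb⟩]
        linarith [hC t ⟨ht.1, htb⟩]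
      · push Not at htb
        have h2 : t ≤ b + δ / 2 := ht.2.trans (min_le_right _ _)
        refine (hball ?_).le
        rw [Real.dist_eq, abs_of_pos (by linarith)]
        linarith
    · exact lt_min hbT (by linarith)
  have hSbdd : BddAbove S := ⟨T, fun b hb => hb.2.1⟩
  let X : ℝ → 𝒳 := fun t => if h : t ∈ S then h.2.2.choose t else 0
  have hX : ∀ b ≤ T, ∀ Y, mild b Y → ∀ t ∈ Set.Icc 0 b, Y t = X t := by
    intro b hb Y hY t ht
    have htS : t ∈ S := ⟨ht.1, ht.2.trans hb, Y, restr _ _ _ ht.2 hY⟩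
    simp only [X, dif_pos htS]
    exact uniq t htS.2.1 _ _ (restr _ _ _ ht.2 hY) htS.2.2.choose_spec t ⟨ht.1, le_rfl⟩
  have hXm : ∀ b ∈ S, mild b X := by
    rintro b ⟨h0, h1, Y, hY⟩
    have he := hX b h1 Y hY
    refine ⟨hY.1.congr fun t ht => (he t ht).symm, fun t ht => ?_⟩
    rw [← he t ht, hY.2 t ht]
    congr 1
    apply intervalIntegral.integral_congr
    intro s hs
    rw [Set.uIcc_of_le ht.1] at hs
    simp only
    rw [he s ⟨hs.1, hs.2.trans ht.2⟩]
  have hcases : S = Set.Icc 0 T ∨ S = Set.Ico 0 (sSup S) := by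
    by_cases h : sSup S ∈ S
    · left
      have hT' : sSup S = T := by
        by_contra hne
        obtain ⟨b', hb', hlt⟩ := hext _ h (lt_of_le_of_ne h.2.1 hne)
        exact absurd (le_csSup hSbdd hb') (not_le.2 hlt)
      rw [hT'] at h
      ext t
      exact ⟨fun ht => ⟨ht.1, ht.2.1⟩, fun ht => hdown T h t ht.1 ht.2⟩
    · right
      ext t
      refine ⟨fun ht => ⟨ht.1, lt_of_le_of_ne (le_csSup hSbdd ht) ?_⟩, fun ht => ?_⟩
      · rintro rfl
        exact h ht
      · obtain ⟨b, hb, htb⟩ := exists_lt_of_lt_csSup ⟨0, h0S⟩ ht.2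
        exact hdown b hb t ht.1 htb.le
  refine ⟨sSup S, S, X, ?_, csSup_le ⟨0, h0S⟩ fun b hb => hb.2.1, hcases, ?_, ?_, ?_⟩
  · obtain ⟨b, hb, hlt⟩ := hext 0 h0S hT
    exact hlt.trans_le (le_csSup hSbdd hb)
  · rcases hcases with h | h
    · have hTS : T ∈ S := by rw [h]; exact ⟨hT.le, le_rfl⟩
      rw [h]
      exact (hXm T hTS).1
    · intro t ht
      have ht' := ht
      rw [h] at ht'
      obtain ⟨b, hb, htb⟩ := exists_lt_of_lt_csSup ⟨0, h0S⟩ ht'.2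
      refine ((hXm b hb).1 t ⟨ht.1, htb.le⟩).mono_of_mem_nhdsWithin ?_
      filter_upwards [self_mem_nhdsWithin, mem_nhdsWithin_of_mem_nhds (gt_mem_nhds htb)] with s h1 h2
      exact ⟨h1.1, le_of_lt h2⟩
  · intro t ht
    exact (hXm t ht).2 t ⟨ht.1, le_rfl⟩
  · intro J Y hJ h0J hJo hYc hYm
    have key : ∀ t ∈ J, mild t Y := by
      intro t ht
      have : Set.Icc 0 t ⊆ J := hJo.out h0J ht
      exact ⟨hYc.mono this, fun s hs => hYm s (this hs)⟩
    exact ⟨fun t ht => ⟨(hJ ht).1, (hJ ht).2, Y, key t ht⟩,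
      fun t ht => hX t (hJ ht).2 Y (key t ht) t ⟨(hJ ht).1, le_rfl⟩⟩
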